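/- arXiv:1306.5786 — 6 statements merged into one kernel-verified Lean document; each statement's English description precedes it below -/
import Mathlib

section
/- Let m be a positive integer, let Y be an invertible m×m real matrix, and let Σr and Σc be symmetric positive definite m×m real matrices. Then l(Σr, Σc; Y) ≥ m² + m·log det(Y Yᵗ / m), i.e. tr(Σr⁻¹ Y Σc⁻¹ Yᵗ) + m·log det Σr + m·log det Σc ≥ m² + m·log det(Y Yᵗ / m). -/
open Matrix

/-!
For fixed `Σc` the likelihood, as a function of `Σr`, is that of a multivariate normal sample with
sample covariance `S = (Y Σc⁻¹ Yᵗ) / m`. Applying `log x ≤ x - 1` to the eigenvalues of `Σr⁻¹ S`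
shows that it is smallest at `Σr = S`, where the terms involving `Σr` equal `m² + m log det S`.
Since `Y` is square, `det S * det Σc = det (Y Yᵗ / m)`, so `Σc` cancels from the resulting bound.

Over `ℝ` or `ℂ` the logarithm of a determinant is taken as `log ‖det ·‖`, which is `log det` on
positive definite matrices.
-/

section TraceLogDet

open scoped ComplexOrder

variable {𝕜 n : Type*} [RCLike 𝕜] [Fintype n] [DecidableEq n]

theorem card_add_log_norm_det_le_re_trace {A : Matrix n n 𝕜} (hA : A.PosDef) :
    Fintype.card n + Real.log ‖A.det‖ ≤ RCLike.re A.trace := by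
  have log_det_eq_sum : Real.log ‖A.det‖ = ∑ i, Real.log (hA.isHermitian.eigenvalues i) := by
    rw [hA.isHermitian.det_eq_prod_eigenvalues, norm_prod,
      Real.log_prod fun i _ ↦ by simpa using (hA.eigenvalues_pos i).ne']
    simp only [RCLike.norm_ofReal, Real.log_abs]
  calc Fintype.card n + Real.log ‖A.det‖
      = ∑ i, (1 + Real.log (hA.isHermitian.eigenvalues i)) := by
        rw [log_det_eq_sum, Finset.sum_add_distrib, Finset.sum_const, nsmul_one,
          Finset.card_univ]
    _ ≤ ∑ i, hA.isHermitian.eigenvalues i := Finset.sum_le_sum fun i _ ↦ by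
        linarith [Real.log_le_sub_one_of_pos (hA.eigenvalues_pos i)]
    _ = RCLike.re A.trace := by
        rw [hA.isHermitian.trace_eq_sum_eigenvalues, map_sum]
        simp only [RCLike.ofReal_re]

open scoped MatrixOrder Matrix.Norms.L2Operator in
theorem card_add_log_norm_det_mul_le_re_trace_mul {A B : Matrix n n 𝕜}
    (hA : A.PosDef) (hB : B.PosDef) :
    Fintype.card n + Real.log ‖(A * B).det‖ ≤ RCLike.re (A * B).trace := by
  obtain ⟨C, hC, rfl⟩ := CStarAlgebra.isStrictlyPositive_iff_eq_star_mul_self.mp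
    hA.isStrictlyPositive
  have det_eq : (star C * C * B).det = (C * B * star C).det := by
    rw [mul_assoc, det_mul_comm]
  have trace_eq : (star C * C * B).trace = (C * B * star C).trace := by
    rw [mul_assoc, trace_mul_comm]
  rw [det_eq, trace_eq]
  exact card_add_log_norm_det_le_re_trace ((IsUnit.posDef_star_right_conjugate_iff hC).mpr hB)

theorem log_norm_det_inv (A : Matrix n n 𝕜) : Real.log ‖A⁻¹.det‖ = -Real.log ‖A.det‖ := by
  rw [det_nonsing_inv, Ring.inverse_eq_inv', norm_inv, Real.log_inv]

theorem log_norm_det_mul {A B : Matrix n n 𝕜} (hA : IsUnit A) (hB : IsUnit B) :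
    Real.log ‖(A * B).det‖ = Real.log ‖A.det‖ + Real.log ‖B.det‖ := by
  have norm_det_ne_zero {M : Matrix n n 𝕜} (hM : IsUnit M) : ‖M.det‖ ≠ 0 :=
    norm_ne_zero_iff.mpr ((isUnit_iff_isUnit_det M).mp hM).ne_zero
  rw [det_mul, norm_mul, Real.log_mul (norm_det_ne_zero hA) (norm_det_ne_zero hB)]

theorem card_add_log_norm_det_le_re_trace_inv_mul {A B : Matrix n n 𝕜}
    (hA : A.PosDef) (hB : B.PosDef) :
    Fintype.card n + Real.log ‖B.det‖ ≤
      RCLike.re (A⁻¹ * B).trace + Real.log ‖A.det‖ := by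
  have key := card_add_log_norm_det_mul_le_re_trace_mul hA.inv hB
  rw [log_norm_det_mul hA.inv.isUnit hB.isUnit, log_norm_det_inv] at key
  linarith

end TraceLogDet

section MatrixNormal

open scoped ComplexOrder

variable {𝕜 m n : Type*} [RCLike 𝕜] [Fintype m] [Fintype n] [DecidableEq n]

/-- The covariance `Y Σc⁻¹ Yᴴ / n` of the rows of `Y`, with `n` the number of columns: the
maximum likelihood estimate of the row covariance when the column covariance `Sc` is known. -/
noncomputable def rowCovarianceMLE (Y : Matrix m n 𝕜) (Sc : Matrix n n 𝕜) : Matrix m m 𝕜 :=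
  (Fintype.card n : ℝ)⁻¹ • (Y * Sc⁻¹ * Yᴴ)

theorem rowCovarianceMLE_posDef [Nonempty n] {Y : Matrix m n 𝕜} {Sc : Matrix n n 𝕜}
    (hY : Function.Injective Y.vecMul) (hSc : Sc.PosDef) : (rowCovarianceMLE Y Sc).PosDef :=
  (hSc.inv.mul_mul_conjTranspose_same hY).smul (by positivity)

theorem log_norm_det_rowCovarianceMLE [Nonempty n] {Y Sc : Matrix n n 𝕜}
    (hY : IsUnit Y) (hSc : Sc.PosDef) :
    Real.log ‖(rowCovarianceMLE Y Sc).det‖ =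
      Real.log ‖((Fintype.card n : ℝ)⁻¹ • (Y * Yᴴ)).det‖ - Real.log ‖Sc.det‖ := by
  have det_eq : (rowCovarianceMLE Y Sc).det =
      (((Fintype.card n : ℝ)⁻¹ • (Y * Yᴴ)) * Sc⁻¹).det := by
    simp only [rowCovarianceMLE, RCLike.real_smul_eq_coe_smul (K := 𝕜), det_smul, det_mul,
      smul_mul_assoc]
    ring
  have gram_posDef : ((Fintype.card n : ℝ)⁻¹ • (Y * Yᴴ)).PosDef :=
    (PosDef.mul_conjTranspose_self Y (vecMul_injective_of_isUnit hY)).smul (by positivity)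
  rw [det_eq, log_norm_det_mul gram_posDef.isUnit hSc.inv.isUnit, log_norm_det_inv, sub_eq_add_neg]

theorem profile_scaledLogLik_le [DecidableEq m] [Nonempty n] {Y : Matrix m n 𝕜}
    {Sr : Matrix m m 𝕜} {Sc : Matrix n n 𝕜} (hY : Function.Injective Y.vecMul)
    (hSr : Sr.PosDef) (hSc : Sc.PosDef) :
    Fintype.card n * (Fintype.card m + Real.log ‖(rowCovarianceMLE Y Sc).det‖) ≤
      RCLike.re (Sr⁻¹ * Y * Sc⁻¹ * Yᴴ).trace + Fintype.card n * Real.log ‖Sr.det‖ := by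
  have trace_eq : Fintype.card n * RCLike.re (Sr⁻¹ * rowCovarianceMLE Y Sc).trace =
      RCLike.re (Sr⁻¹ * Y * Sc⁻¹ * Yᴴ).trace := by
    rw [rowCovarianceMLE, mul_smul_comm, trace_smul, RCLike.smul_re,
      mul_inv_cancel_left₀ (by positivity)]
    simp only [Matrix.mul_assoc]
  rw [← trace_eq, ← mul_add]
  exact mul_le_mul_of_nonneg_left
    (card_add_log_norm_det_le_re_trace_inv_mul hSr (rowCovarianceMLE_posDef hY hSc))
    (Nat.cast_nonneg _)

theorem matrixNormal_scaledLogLik_lower_bound_general [Nonempty n] {Y Sr Sc : Matrix n n 𝕜}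
    (hY : IsUnit Y) (hSr : Sr.PosDef) (hSc : Sc.PosDef) :
    (Fintype.card n : ℝ) ^ 2 +
        Fintype.card n * Real.log ‖((Fintype.card n : ℝ)⁻¹ • (Y * Yᴴ)).det‖ ≤
      RCLike.re (Sr⁻¹ * Y * Sc⁻¹ * Yᴴ).trace + Fintype.card n * Real.log ‖Sr.det‖ +
        Fintype.card n * Real.log ‖Sc.det‖ := by
  have profile := profile_scaledLogLik_le (vecMul_injective_of_isUnit hY) hSr hSc
  rw [log_norm_det_rowCovarianceMLE hY hSc] at profile
  linarith

end MatrixNormal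

/-- For a positive integer `m`, an invertible `m × m` real matrix `Y`, and
symmetric positive definite matrices `Sr = Σr`, `Sc = Σc`, the scaled log-likelihood
`l(Σr, Σc; Y) = tr(Σr⁻¹ Y Σc⁻¹ Yᵗ) + m·log det Σr + m·log det Σc` is bounded below by
`m² + m·log det(Y Yᵗ / m)`. -/
theorem matrixNormal_scaledLogLik_lower_bound
    (m : ℕ) (hm : 0 < m) (Y Sr Sc : Matrix (Fin m) (Fin m) ℝ)
    (hY : IsUnit Y.det) (hSr : Sr.PosDef) (hSc : Sc.PosDef) :
    (Sr⁻¹ * Y * Sc⁻¹ * Yᵀ).trace + m * Real.log Sr.det + m * Real.log Sc.det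
      ≥ (m : ℝ) ^ 2 + m * Real.log (((m : ℝ)⁻¹ • (Y * Yᵀ)).det) := by
  have : Nonempty (Fin m) := Fin.pos_iff_nonempty.mp hm
  simpa only [Fintype.card_fin, conjTranspose_eq_transpose_of_trivial, RCLike.re_to_real,
    Real.norm_eq_abs, Real.log_abs] using
    matrixNormal_scaledLogLik_lower_bound_general ((isUnit_iff_isUnit_det Y).mpr hY) hSr hSc
end

section
/- Let m be a positive integer, let Y be an invertible m×m real matrix, and let Σc be a symmetric positive definite m×m real matrix. Then Y Σc⁻¹ Yᵗ / m is symmetric positive definite and l(Y Σc⁻¹ Yᵗ / m, Σc; Y) = m² + m·log det(Y Yᵗ / m); that is, the lower bound m² + m·log det(Y Yᵗ / m) for the scaled log-likelihood is attained at Σr = Y Σc⁻¹ Yᵗ / m. -/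
open Matrix

/-!
At `Σr = Y Σc⁻¹ Yᴴ / q` the trace term is the trace of `q • 1`, and for square `Y` the product
`det Σr * det Σc` no longer depends on `Σc`.
-/

section TraceDet

variable {n : Type*} [Fintype n] [DecidableEq n]

theorem trace_inv_smul_mul_self {K : Type*} [Field K] {c : K} (hc : c ≠ 0) {A : Matrix n n K}
    (hA : IsUnit A.det) : ((c • A)⁻¹ * A).trace = c⁻¹ * Fintype.card n := by
  have hinv : (c • A)⁻¹ = c⁻¹ • A⁻¹ := inv_smul' A (Units.mk0 c hc) hA
  rw [hinv, smul_mul, nonsing_inv_mul A hA, trace_smul, trace_one, smul_eq_mul]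

theorem det_mul_inv_mul_mul_det {R : Type*} [CommRing R] (A B : Matrix n n R) {S : Matrix n n R}
    (hS : IsUnit S.det) : (A * S⁻¹ * B).det * S.det = (A * B).det := by
  calc (A * S⁻¹ * B).det * S.det = A.det * B.det * (S⁻¹.det * S.det) := by
        rw [det_mul, det_mul]; ring
    _ = (A * B).det := by rw [det_nonsing_inv_mul_det S hS, mul_one, det_mul]

end TraceDet

section MatrixNormal

variable {𝕜 p q n : Type*} [RCLike 𝕜] [Fintype p] [Fintype q] [DecidableEq q]
  [Fintype n] [DecidableEq n]

/-- The scaled log-likelihood `l(Σr, Σc; Y)` of the mean-zero matrix normal model, with row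
covariance `Sr = Σr` and column covariance `Sc = Σc`, for a real or complex `p × q` observation `Y`;
`log det (Σc ⊗ Σr)` is expanded into its two summands. The trace and the determinants are real at
positive definite arguments, so `RCLike.re` and the norm only transport them from `𝕜` to `ℝ`. -/
noncomputable def scaledLogLik [DecidableEq p] (Sr : Matrix p p 𝕜) (Sc : Matrix q q 𝕜)
    (Y : Matrix p q 𝕜) : ℝ :=
  RCLike.re (Sr⁻¹ * Y * Sc⁻¹ * Yᴴ).trace
    + Fintype.card q * Real.log ‖Sr.det‖ + Fintype.card p * Real.log ‖Sc.det‖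

/-- The maximum likelihood estimate `Y Σc⁻¹ Yᴴ / q` of the row covariance `Σr` for a fixed column
covariance `Sc = Σc`: the minimizer of `scaledLogLik` in `Σr` when `Y` has full row rank. -/
noncomputable def rowCovMLE (Sc : Matrix q q 𝕜) (Y : Matrix p q 𝕜) : Matrix p p 𝕜 :=
  (Fintype.card q : 𝕜)⁻¹ • (Y * Sc⁻¹ * Yᴴ)

open scoped ComplexOrder in
theorem posDef_rowCovMLE [Nonempty q] {Sc : Matrix q q 𝕜} {Y : Matrix p q 𝕜} (hSc : Sc.PosDef)
    (hY : Function.Injective Y.vecMul) : (rowCovMLE Sc Y).PosDef := by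
  have hcard : (0 : 𝕜) < (Fintype.card q : 𝕜)⁻¹ :=
    RCLike.inv_pos.mpr (Nat.cast_pos.mpr Fintype.card_pos)
  exact (hSc.inv.mul_mul_conjTranspose_same hY).smul hcard

theorem scaledLogLik_rowCovMLE [DecidableEq p] [Nonempty q] {Sc : Matrix q q 𝕜}
    {Y : Matrix p q 𝕜} (h : IsUnit (Y * Sc⁻¹ * Yᴴ).det) :
    scaledLogLik (rowCovMLE Sc Y) Sc Y = Fintype.card q * Fintype.card p
      + Fintype.card q * Real.log ‖(rowCovMLE Sc Y).det‖
      + Fintype.card p * Real.log ‖Sc.det‖ := by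
  have hcard : (Fintype.card q : 𝕜)⁻¹ ≠ 0 := inv_ne_zero (Nat.cast_ne_zero.mpr Fintype.card_ne_zero)
  have htrace : ((rowCovMLE Sc Y)⁻¹ * Y * Sc⁻¹ * Yᴴ).trace
      = ((Fintype.card q * Fintype.card p : ℕ) : 𝕜) := by
    rw [Matrix.mul_assoc, Matrix.mul_assoc, ← Matrix.mul_assoc Y, rowCovMLE,
      trace_inv_smul_mul_self hcard h, inv_inv, Nat.cast_mul]
  rw [scaledLogLik, htrace, RCLike.natCast_re, Nat.cast_mul]

theorem det_rowCovMLE_mul_det {Sc : Matrix n n 𝕜} (hSc : IsUnit Sc.det) (Y : Matrix n n 𝕜) :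
    (rowCovMLE Sc Y).det * Sc.det = ((Fintype.card n : 𝕜)⁻¹ • (Y * Yᴴ)).det := by
  rw [rowCovMLE, det_smul, mul_assoc, det_mul_inv_mul_mul_det Y Yᴴ hSc, ← det_smul]

open scoped ComplexOrder in
theorem matrixNormal_scaledLogLik_bound_attained_general [Nonempty n] {Sc Y : Matrix n n 𝕜}
    (hY : IsUnit Y.det) (hSc : Sc.PosDef) :
    (rowCovMLE Sc Y).PosDef ∧
    scaledLogLik (rowCovMLE Sc Y) Sc Y = (Fintype.card n : ℝ) ^ 2
      + Fintype.card n * Real.log ‖((Fintype.card n : 𝕜)⁻¹ • (Y * Yᴴ)).det‖ := by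
  have hYinj : Function.Injective Y.vecMul :=
    vecMul_injective_of_isUnit ((isUnit_iff_isUnit_det Y).mpr hY)
  have hSr : (rowCovMLE Sc Y).PosDef := posDef_rowCovMLE hSc hYinj
  have hprod : IsUnit (Y * Sc⁻¹ * Yᴴ).det :=
    (hSc.inv.mul_mul_conjTranspose_same hYinj).det_pos.ne'.isUnit
  refine ⟨hSr, ?_⟩
  rw [scaledLogLik_rowCovMLE hprod, ← det_rowCovMLE_mul_det hSc.det_pos.ne'.isUnit, norm_mul,
    Real.log_mul (norm_ne_zero_iff.mpr hSr.det_pos.ne') (norm_ne_zero_iff.mpr hSc.det_pos.ne')]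
  ring

end MatrixNormal

/-- For a positive integer `m`, an invertible `m × m` real matrix `Y`, and a
symmetric positive definite matrix `Sc = Σc`, the matrix `Y Σc⁻¹ Yᵗ / m` is symmetric positive
definite and the scaled log-likelihood
`l(Σr, Σc; Y) = tr(Σr⁻¹ Y Σc⁻¹ Yᵗ) + m·log det Σr + m·log det Σc` attains the value
`m² + m·log det(Y Yᵗ / m)` at `Σr = Y Σc⁻¹ Yᵗ / m`. -/
theorem matrixNormal_scaledLogLik_bound_attained
    (m : ℕ) (hm : 0 < m) (Y Sc : Matrix (Fin m) (Fin m) ℝ)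
    (hY : IsUnit Y.det) (hSc : Sc.PosDef) :
    ((m : ℝ)⁻¹ • (Y * Sc⁻¹ * Yᵀ)).PosDef ∧
    (((m : ℝ)⁻¹ • (Y * Sc⁻¹ * Yᵀ))⁻¹ * Y * Sc⁻¹ * Yᵀ).trace
        + m * Real.log ((m : ℝ)⁻¹ • (Y * Sc⁻¹ * Yᵀ)).det + m * Real.log Sc.det
      = (m : ℝ) ^ 2 + m * Real.log (((m : ℝ)⁻¹ • (Y * Yᵀ)).det) := by
  have : NeZero m := ⟨hm.ne'⟩
  simpa only [scaledLogLik, rowCovMLE, Fintype.card_fin, RCLike.re_to_real, Real.norm_eq_abs,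
    Real.log_abs, conjTranspose_eq_transpose_of_trivial]
    using matrixNormal_scaledLogLik_bound_attained_general hY hSc
end

section
/- Let m be a positive integer and let Y be an invertible m×m real matrix. If (D_r, D_c) is a null minimizer for Y, then for every index i, (D_r)_{ii} = (Y D_c⁻¹ Yᵗ)_{ii} / m, and for every index j, (D_c)_{jj} = (Yᵗ D_r⁻¹ Y)_{jj} / m; equivalently, D_r = (Y D_c⁻¹ Yᵗ ∘ I)/m and D_c = (Yᵗ D_r⁻¹ Y ∘ I)/m, where ∘ denotes the Hadamard (entrywise) product and I the identity matrix. -/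
open Matrix

/-- A positive diagonal matrix: a diagonal matrix with strictly positive diagonal entries. -/
def IsPosDiag {m : ℕ} (D : Matrix (Fin m) (Fin m) ℝ) : Prop :=
  D.IsDiag ∧ ∀ i, 0 < D i i

/-- The scaled log-likelihood of the mean-zero matrix normal model:
`l(Σr, Σc; Y) = tr(Σr⁻¹ Y Σc⁻¹ Yᵗ) + log det (Σc ⊗ Σr)`. -/
noncomputable def sll {m : ℕ} (Sr Sc Y : Matrix (Fin m) (Fin m) ℝ) : ℝ :=
  (Sr⁻¹ * Y * Sc⁻¹ * Yᵀ).trace + Real.log (Matrix.kroneckerMap (· * ·) Sc Sr).det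

/-- A null minimizer for `Y`: a pair of positive diagonal matrices minimizing
`l(D_r, D_c; Y)` over all pairs of positive diagonal matrices. -/
def IsNullMinimizer {m : ℕ} (Y Dr Dc : Matrix (Fin m) (Fin m) ℝ) : Prop :=
  IsPosDiag Dr ∧ IsPosDiag Dc ∧
    ∀ Dr' Dc' : Matrix (Fin m) (Fin m) ℝ, IsPosDiag Dr' → IsPosDiag Dc' →
      sll Dr Dc Y ≤ sll Dr' Dc' Y

/-!
For fixed `Σc = D_c`, the restriction of `l` to diagonal `Σr = diagonal r` is, up to a constant, the
separable sum `∑ i, (s i / r i + m log (r i))` with `s i = (Y D_c⁻¹ Yᵗ)_{ii}`, so at a minimizer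
each `r i` minimizes its own summand, whose only critical point is `s i / m`. Transposing `Y`
exchanges the roles of `Σr` and `Σc`, which gives the equation for `D_c`.
-/

theorem isMinOn_apply_of_isMinOn_sum {ι β : Type*} {α : ι → Type*} [Fintype ι]
    [AddCommMonoid β] [PartialOrder β] [IsOrderedCancelAddMonoid β] {s : ∀ i, Set (α i)}
    {f : ∀ i, α i → β} {x : ∀ i, α i} (hx : x ∈ Set.univ.pi s)
    (h : IsMinOn (fun y ↦ ∑ i, f i (y i)) (Set.univ.pi s) x) (i : ι) :
    IsMinOn (f i) (s i) (x i) := by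
  classical
  intro t ht
  have hsum : ∑ j, f j (x j) ≤ ∑ j, f j (Function.update x i t j) :=
    h ((Set.update_mem_pi_iff_of_mem hx).2 fun _ ↦ ht)
  have hrest : ∑ j ∈ Finset.univ.erase i, f j (Function.update x i t j) =
      ∑ j ∈ Finset.univ.erase i, f j (x j) :=
    Finset.sum_congr rfl fun j hj ↦ by rw [Function.update_of_ne (Finset.ne_of_mem_erase hj)]
  rw [← Finset.add_sum_erase _ _ (Finset.mem_univ i),
    ← Finset.add_sum_erase _ (fun j ↦ f j (Function.update x i t j)) (Finset.mem_univ i),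
    hrest, Function.update_self] at hsum
  exact le_of_add_le_add_right hsum

theorem mul_eq_of_isLocalMin_div_add_mul_log {s c r : ℝ} (hr : r ≠ 0)
    (h : IsLocalMin (fun t ↦ s / t + c * Real.log t) r) : c * r = s := by
  have hderiv : HasDerivAt (fun t ↦ s / t + c * Real.log t) (s * -(r ^ 2)⁻¹ + c * r⁻¹) r := by
    simpa only [div_eq_mul_inv] using
      ((hasDerivAt_inv hr).const_mul s).fun_add ((Real.hasDerivAt_log hr).const_mul c)
  have hcrit : s * -(r ^ 2)⁻¹ + c * r⁻¹ = 0 := h.hasDerivAt_eq_zero hderiv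
  field_simp at hcrit
  linarith

section Matrices

variable {n p K : Type*} [DecidableEq n] [Field K]

theorem eq_inv_smul_hadamard_one_of_isDiag {A M : Matrix n n K} {k : K} (hA : A.IsDiag)
    (h : ∀ i, A i i = M i i / k) : A = k⁻¹ • (M ⊙ 1) := by
  have hdiag : A.diag = k⁻¹ • M.diag := funext fun i ↦ (h i).trans (div_eq_inv_mul _ _)
  rw [← hA.diagonal_diag, hdiag, diagonal_smul, hadamard_one]

variable [Fintype n]

theorem trace_inv_diagonal_mul {r : n → K} (hr : ∀ i, r i ≠ 0) (M : Matrix n n K) :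
    ((diagonal r)⁻¹ * M).trace = ∑ i, M i i / r i := by
  have hinv : (diagonal r)⁻¹ = diagonal fun i ↦ (r i)⁻¹ :=
    inv_eq_right_inv (by simp [diagonal_mul_diagonal, hr])
  simp [hinv, trace, diagonal_mul, div_eq_inv_mul]

theorem log_det_kronecker [Fintype p] [DecidableEq p] {A : Matrix n n ℝ} {B : Matrix p p ℝ}
    (hA : A.det ≠ 0) (hB : B.det ≠ 0) :
    Real.log (kroneckerMap (· * ·) A B).det =
      Fintype.card p * Real.log A.det + Fintype.card n * Real.log B.det := by
  rw [det_kronecker, Real.log_mul (pow_ne_zero _ hA) (pow_ne_zero _ hB), Real.log_pow,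
    Real.log_pow]

end Matrices

section LogLikelihood

variable {m : ℕ} {A B : Matrix (Fin m) (Fin m) ℝ}

theorem IsPosDiag.det_ne_zero (hA : IsPosDiag A) : A.det ≠ 0 := by
  rw [← hA.1.diagonal_diag, det_diagonal]
  exact Finset.prod_ne_zero_iff.2 fun i _ ↦ (hA.2 i).ne'

theorem isPosDiag_diagonal {r : Fin m → ℝ} (hr : ∀ i, 0 < r i) : IsPosDiag (diagonal r) :=
  ⟨isDiag_diagonal r, fun i ↦ by simpa only [diagonal_apply_eq] using hr i⟩

theorem sll_transpose (A B Y : Matrix (Fin m) (Fin m) ℝ) : sll A B Yᵀ = sll B A Y := by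
  have htrace : (A⁻¹ * Yᵀ * B⁻¹ * Y).trace = (B⁻¹ * Y * A⁻¹ * Yᵀ).trace := by
    rw [Matrix.mul_assoc (A⁻¹ * Yᵀ), trace_mul_comm, Matrix.mul_assoc (B⁻¹ * Y)]
  simp only [sll, transpose_transpose, htrace, det_kronecker, mul_comm]

theorem sll_diagonal_left {r : Fin m → ℝ} (hr : ∀ i, r i ≠ 0) (hB : B.det ≠ 0)
    (Y : Matrix (Fin m) (Fin m) ℝ) :
    sll (diagonal r) B Y =
      ∑ i, ((Y * B⁻¹ * Yᵀ) i i / r i + m * Real.log (r i)) + m * Real.log B.det := by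
  have hdet : (diagonal r).det ≠ 0 := by
    simpa only [det_diagonal] using Finset.prod_ne_zero_iff.2 fun i _ ↦ hr i
  have htrace : ((diagonal r)⁻¹ * Y * B⁻¹ * Yᵀ).trace = ∑ i, (Y * B⁻¹ * Yᵀ) i i / r i := by
    simpa only [Matrix.mul_assoc] using trace_inv_diagonal_mul hr (Y * B⁻¹ * Yᵀ)
  rw [sll, htrace, log_det_kronecker hB hdet, det_diagonal, Real.log_prod fun i _ ↦ hr i,
    Finset.sum_add_distrib, ← Finset.mul_sum, Fintype.card_fin]
  ring

theorem isMinOn_div_add_mul_log_of_isMinOn_sll {r : Fin m → ℝ} {Y : Matrix (Fin m) (Fin m) ℝ}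
    (hr : ∀ i, 0 < r i) (hB : B.det ≠ 0)
    (h : IsMinOn (fun A ↦ sll A B Y) {A | IsPosDiag A} (diagonal r)) (i : Fin m) :
    IsMinOn (fun t ↦ (Y * B⁻¹ * Yᵀ) i i / t + m * Real.log t) (Set.Ioi 0) (r i) := by
  refine isMinOn_apply_of_isMinOn_sum (s := fun _ ↦ Set.Ioi 0)
    (f := fun j t ↦ (Y * B⁻¹ * Yᵀ) j j / t + m * Real.log t) (fun j _ ↦ hr j) ?_ i
  intro r' hr'
  have hpos : ∀ j, 0 < r' j := fun j ↦ hr' j trivial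
  have hle : sll (diagonal r) B Y ≤ sll (diagonal r') B Y := h (isPosDiag_diagonal hpos)
  rw [sll_diagonal_left (fun j ↦ (hr j).ne') hB,
    sll_diagonal_left (fun j ↦ (hpos j).ne') hB] at hle
  exact le_of_add_le_add_right hle

theorem apply_self_eq_div_of_isMinOn_sll {Y : Matrix (Fin m) (Fin m) ℝ} (hA : IsPosDiag A)
    (hB : B.det ≠ 0) (h : IsMinOn (fun A' ↦ sll A' B Y) {A' | IsPosDiag A'} A) (i : Fin m) :
    A i i = (Y * B⁻¹ * Yᵀ) i i / m := by
  rw [← hA.1.diagonal_diag] at h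
  have hloc : IsLocalMin (fun t ↦ (Y * B⁻¹ * Yᵀ) i i / t + m * Real.log t) (A i i) :=
    (isMinOn_div_add_mul_log_of_isMinOn_sll hA.2 hB h i).isLocalMin (Ioi_mem_nhds (hA.2 i))
  have hm : (m : ℝ) ≠ 0 := Nat.cast_ne_zero.2 i.pos.ne'
  rw [eq_div_iff hm, mul_comm]
  exact mul_eq_of_isLocalMin_div_add_mul_log (hA.2 i).ne' hloc

theorem nullMinimizer_likelihood_equations_general {Y Dr Dc : Matrix (Fin m) (Fin m) ℝ}
    (h : IsNullMinimizer Y Dr Dc) :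
    (∀ i, Dr i i = (Y * Dc⁻¹ * Yᵀ) i i / m) ∧
    (∀ j, Dc j j = (Yᵀ * Dr⁻¹ * Y) j j / m) ∧
    Dr = (m : ℝ)⁻¹ • Matrix.hadamard (Y * Dc⁻¹ * Yᵀ) 1 ∧
    Dc = (m : ℝ)⁻¹ • Matrix.hadamard (Yᵀ * Dr⁻¹ * Y) 1 := by
  obtain ⟨hr, hc, hmin⟩ := h
  have hrow : ∀ i, Dr i i = (Y * Dc⁻¹ * Yᵀ) i i / m :=
    apply_self_eq_div_of_isMinOn_sll hr hc.det_ne_zero fun A hA ↦ hmin A Dc hA hc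
  have hmin' : IsMinOn (fun B ↦ sll B Dr Yᵀ) {B | IsPosDiag B} Dc := by
    simp only [sll_transpose]
    exact fun B hB ↦ hmin Dr B hr hB
  have hcol : ∀ j, Dc j j = (Yᵀ * Dr⁻¹ * Y) j j / m := by
    simpa only [transpose_transpose] using
      apply_self_eq_div_of_isMinOn_sll hc hr.det_ne_zero hmin'
  exact ⟨hrow, hcol, eq_inv_smul_hadamard_one_of_isDiag hr.1 hrow,
    eq_inv_smul_hadamard_one_of_isDiag hc.1 hcol⟩

end LogLikelihood

/-- A null minimizer `(D_r, D_c)` for an invertible `Y` satisfies the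
likelihood equations: `(D_r)_{ii} = (Y D_c⁻¹ Yᵗ)_{ii}/m` for all `i` and
`(D_c)_{jj} = (Yᵗ D_r⁻¹ Y)_{jj}/m` for all `j`; equivalently,
`D_r = (Y D_c⁻¹ Yᵗ ∘ I)/m` and `D_c = (Yᵗ D_r⁻¹ Y ∘ I)/m` with `∘` the Hadamard product. -/
theorem nullMinimizer_likelihood_equations
    (m : ℕ) (hm : 0 < m) (Y Dr Dc : Matrix (Fin m) (Fin m) ℝ)
    (hY : IsUnit Y.det) (h : IsNullMinimizer Y Dr Dc) :
    (∀ i, Dr i i = (Y * Dc⁻¹ * Yᵀ) i i / m) ∧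
    (∀ j, Dc j j = (Yᵀ * Dr⁻¹ * Y) j j / m) ∧
    Dr = (m : ℝ)⁻¹ • Matrix.hadamard (Y * Dc⁻¹ * Yᵀ) 1 ∧
    Dc = (m : ℝ)⁻¹ • Matrix.hadamard (Yᵀ * Dr⁻¹ * Y) 1 :=
  nullMinimizer_likelihood_equations_general h
end

section
/- Let m be a positive integer, let Y be an invertible m×m real matrix, and let D₁ and D₂ be positive diagonal m×m matrices. Then a pair (D_r, D_c) of positive diagonal m×m matrices is a null minimizer for Y if and only if (D₁ D_r D₁, D₂ D_c D₂) is a null minimizer for D₁ Y D₂; that is, the null maximum likelihood estimate is equivariant with respect to left and right multiplication of the data by positive diagonal matrices. -/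
open Matrix

/-!
For invertible `A` and `B`, replacing `(Σr, Σc, Y)` by `(A Σr Aᵗ, B Σc Bᵗ, A Y Bᵗ)` conjugates the
matrix under the trace and multiplies `det (Σc ⊗ Σr)` by `det (B ⊗ A) ^ 2`, so it shifts the
log-likelihood by a constant independent of `Σr` and `Σc`.
If `D` is an invertible diagonal matrix, then `R ↦ D R D` permutes the positive diagonal matrices,
since it multiplies the diagonal entries by positive squares. Hence minimizers correspond to
minimizers.
-/

theorem surjective_mul_mul_of_isUnit {M : Type*} [Monoid M] {a b : M} (ha : IsUnit a)
    (hb : IsUnit b) : Function.Surjective fun x ↦ a * x * b :=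
  hb.unit.mulRight.surjective.comp ha.unit.mulLeft.surjective

section Congruence

open scoped Kronecker

variable {n p K : Type*} [Fintype n] [DecidableEq n] [Fintype p] [DecidableEq p] [CommRing K]

theorem trace_inv_mul_mul_inv_mul_transpose_congruence {A : Matrix n n K} {B : Matrix p p K}
    (hA : IsUnit A) (hB : IsUnit B) (R : Matrix n n K) (C : Matrix p p K) (Y : Matrix n p K) :
    ((A * R * Aᵀ)⁻¹ * (A * Y * Bᵀ) * (B * C * Bᵀ)⁻¹ * (A * Y * Bᵀ)ᵀ).trace =
      (R⁻¹ * Y * C⁻¹ * Yᵀ).trace := by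
  have hA' : IsUnit A.det := (isUnit_iff_isUnit_det A).1 hA
  have hB' : IsUnit B.det := (isUnit_iff_isUnit_det B).1 hB
  have hBt : IsUnit Bᵀ.det := isUnit_det_transpose B hB'
  have conj_eq : (A * R * Aᵀ)⁻¹ * (A * Y * Bᵀ) * (B * C * Bᵀ)⁻¹ * (A * Y * Bᵀ)ᵀ =
      Aᵀ⁻¹ * (R⁻¹ * Y * C⁻¹ * Yᵀ) * Aᵀ := by
    simp only [Matrix.mul_inv_rev, transpose_mul, transpose_transpose, Matrix.mul_assoc,
      nonsing_inv_mul_cancel_left _ _ hA', nonsing_inv_mul_cancel_left _ _ hB',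
      mul_nonsing_inv_cancel_left _ _ hBt]
  rw [conj_eq, trace_conj' ((isUnit_transpose A).2 hA)]

theorem det_kronecker_congruence (A R : Matrix n n K) (B C : Matrix p p K) :
    ((B * C * Bᵀ) ⊗ₖ (A * R * Aᵀ)).det = (C ⊗ₖ R).det * (B ⊗ₖ A).det ^ 2 := by
  rw [mul_kronecker_mul, mul_kronecker_mul, kroneckerMap_transpose, det_mul, det_mul,
    det_transpose]
  ring

theorem sll_congruence {m : ℕ} {A B R C : Matrix (Fin m) (Fin m) ℝ} (hA : IsUnit A)
    (hB : IsUnit B) (hR : IsUnit R) (hC : IsUnit C) (Y : Matrix (Fin m) (Fin m) ℝ) :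
    sll (A * R * Aᵀ) (B * C * Bᵀ) (A * Y * Bᵀ) =
      sll R C Y + Real.log ((B ⊗ₖ A).det ^ 2) := by
  have det_CR_ne_zero : (C ⊗ₖ R).det ≠ 0 :=
    ((isUnit_iff_isUnit_det _).1 (hC.kronecker hR)).ne_zero
  have det_BA_ne_zero : (B ⊗ₖ A).det ≠ 0 :=
    ((isUnit_iff_isUnit_det _).1 (hB.kronecker hA)).ne_zero
  rw [sll, sll, trace_inv_mul_mul_inv_mul_transpose_congruence hA hB, det_kronecker_congruence,
    Real.log_mul det_CR_ne_zero (pow_ne_zero 2 det_BA_ne_zero), add_assoc]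

theorem sll_congruence_le_iff {m : ℕ} {A B R C R' C' : Matrix (Fin m) (Fin m) ℝ} (hA : IsUnit A)
    (hB : IsUnit B) (hR : IsUnit R) (hC : IsUnit C) (hR' : IsUnit R') (hC' : IsUnit C')
    (Y : Matrix (Fin m) (Fin m) ℝ) :
    sll (A * R * Aᵀ) (B * C * Bᵀ) (A * Y * Bᵀ) ≤ sll (A * R' * Aᵀ) (B * C' * Bᵀ) (A * Y * Bᵀ) ↔
      sll R C Y ≤ sll R' C' Y := by
  rw [sll_congruence hA hB hR hC, sll_congruence hA hB hR' hC', add_le_add_iff_right]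

end Congruence

section DiagonalRescaling

variable {m : ℕ} {D : Matrix (Fin m) (Fin m) ℝ}

theorem IsPosDiag.isUnit (hD : IsPosDiag D) : IsUnit D := by
  rw [← hD.1.diagonal_diag, isUnit_diagonal, Pi.isUnit_iff]
  exact fun i ↦ (hD.2 i).ne'.isUnit

theorem isPosDiag_mul_mul_self_iff (hD : D.IsDiag) (hU : IsUnit D)
    {R : Matrix (Fin m) (Fin m) ℝ} : IsPosDiag (D * R * D) ↔ IsPosDiag R := by
  obtain ⟨d, rfl⟩ : ∃ d, D = diagonal d := ⟨D.diag, hD.diagonal_diag.symm⟩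
  have d_ne_zero (i : Fin m) : d i ≠ 0 := (Pi.isUnit_iff.1 (isUnit_diagonal.1 hU) i).ne_zero
  have entry (i j : Fin m) : (diagonal d * R * diagonal d) i j = d i * R i j * d j := by
    rw [mul_diagonal, diagonal_mul]
  refine and_congr ?_ (forall_congr' fun i ↦ ?_)
  · simp only [IsDiag, Pairwise, entry, mul_eq_zero, d_ne_zero, false_or, or_false]
  · rw [entry, mul_right_comm, mul_pos_iff_of_pos_left (mul_self_pos.2 (d_ne_zero i))]

theorem nullMinimizer_equivariant_general {D₁ D₂ : Matrix (Fin m) (Fin m) ℝ}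
    (hD₁ : D₁.IsDiag) (hU₁ : IsUnit D₁) (hD₂ : D₂.IsDiag) (hU₂ : IsUnit D₂)
    (Y Dr Dc : Matrix (Fin m) (Fin m) ℝ) :
    IsNullMinimizer Y Dr Dc ↔
      IsNullMinimizer (D₁ * Y * D₂) (D₁ * Dr * D₁) (D₂ * Dc * D₂) := by
  have posDiag₁ {R} : IsPosDiag (D₁ * R * D₁) ↔ IsPosDiag R := isPosDiag_mul_mul_self_iff hD₁ hU₁
  have posDiag₂ {C} : IsPosDiag (D₂ * C * D₂) ↔ IsPosDiag C := isPosDiag_mul_mul_self_iff hD₂ hU₂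
  rw [IsNullMinimizer, IsNullMinimizer, posDiag₁, posDiag₂]
  refine and_congr_right fun hDr ↦ and_congr_right fun hDc ↦ ?_
  have sll_le_iff {R C} (hR : IsPosDiag R) (hC : IsPosDiag C) :
      sll (D₁ * Dr * D₁) (D₂ * Dc * D₂) (D₁ * Y * D₂) ≤
          sll (D₁ * R * D₁) (D₂ * C * D₂) (D₁ * Y * D₂) ↔
        sll Dr Dc Y ≤ sll R C Y := by
    simpa only [hD₁.isSymm.eq, hD₂.isSymm.eq] using
      sll_congruence_le_iff hU₁ hU₂ hDr.isUnit hDc.isUnit hR.isUnit hC.isUnit Y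
  constructor
  · intro hmin
    refine (surjective_mul_mul_of_isUnit hU₁ hU₁).forall.2 fun R ↦
      (surjective_mul_mul_of_isUnit hU₂ hU₂).forall.2 fun C hR hC ↦ ?_
    rw [posDiag₁] at hR
    rw [posDiag₂] at hC
    exact (sll_le_iff hR hC).2 (hmin R C hR hC)
  · intro hmin R C hR hC
    exact (sll_le_iff hR hC).1 (hmin _ _ (posDiag₁.2 hR) (posDiag₂.2 hC))

end DiagonalRescaling

/-- For positive diagonal `D₁`, `D₂` and invertible `Y`, a pair `(D_r, D_c)`
of positive diagonal matrices is a null minimizer for `Y` iff `(D₁ D_r D₁, D₂ D_c D₂)` is a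
null minimizer for `D₁ Y D₂`: the null MLE is equivariant under diagonal rescalings. -/
theorem nullMinimizer_equivariant
    (m : ℕ) (hm : 0 < m) (Y D₁ D₂ Dr Dc : Matrix (Fin m) (Fin m) ℝ)
    (hY : IsUnit Y.det) (hD₁ : IsPosDiag D₁) (hD₂ : IsPosDiag D₂)
    (hDr : IsPosDiag Dr) (hDc : IsPosDiag Dc) :
    IsNullMinimizer Y Dr Dc ↔
      IsNullMinimizer (D₁ * Y * D₂) (D₁ * Dr * D₁) (D₂ * Dc * D₂) :=
  nullMinimizer_equivariant_general hD₁.1 hD₁.isUnit hD₂.1 hD₂.isUnit Y Dr Dc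
end

section
/- Let m and p be positive integers and let Y₁, …, Y_p be invertible m×m real matrices. Then the function L(d, Σr, Σc) = Σ_{i=1}^p (1/d_i)·tr(Y_i Σc⁻¹ Y_iᵗ Σr⁻¹) + m·p·log det Σr + m·p·log det Σc + m²·Σ_{i=1}^p log d_i is bounded below over all d = (d₁, …, d_p) with each d_i > 0 and all symmetric positive definite m×m real matrices Σr and Σc; that is, there exists a real constant c such that L(d, Σr, Σc) ≥ c for all such (d, Σr, Σc). -/
/-!
Stein's inequality `log det A ≤ tr A - n` for positive definite `A` is `log x ≤ x - 1` summed over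
the eigenvalues, and it persists for a product `A B` of positive definite matrices, since writing
`B = Cᴴ C` makes `A B` similar to the positive definite `C A Cᴴ`. Applied to `Y Σc⁻¹ Yᵗ / (d m)`
and `Σr⁻¹`, where the scale `1 / (d m)` makes the determinant produce exactly the logarithmic
penalties, the inequality bounds each observation's share of the likelihood below by a
constant depending only on `Y`.
-/

open Matrix

/-- The scaled log-likelihood of `p` independent heteroscedastic matrix normal observations
`Y_i ~ N(0, d_i·Σr, Σc)`:
`L(d, Σr, Σc) = Σᵢ (1/dᵢ)·tr(Yᵢ Σc⁻¹ Yᵢᵗ Σr⁻¹) + mp·log det Σr + mp·log det Σc + m²·Σᵢ log dᵢ`. -/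
noncomputable def hetL {m p : ℕ} (Y : Fin p → Matrix (Fin m) (Fin m) ℝ)
    (d : Fin p → ℝ) (Sr Sc : Matrix (Fin m) (Fin m) ℝ) : ℝ :=
  ∑ i, (d i)⁻¹ * (Y i * Sc⁻¹ * (Y i)ᵀ * Sr⁻¹).trace
    + m * p * Real.log Sr.det + m * p * Real.log Sc.det
    + (m : ℝ) ^ 2 * ∑ i, Real.log (d i)

section Stein

open scoped ComplexOrder

variable {n 𝕜 : Type*} [Fintype n] [DecidableEq n] [RCLike 𝕜] {A B : Matrix n n 𝕜}

theorem log_re_det_le_re_trace_sub_card (hA : A.PosDef) :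
    Real.log (RCLike.re A.det) ≤ RCLike.re A.trace - Fintype.card n := by
  have hdet : RCLike.re A.det = ∏ i, hA.isHermitian.eigenvalues i := by
    rw [hA.isHermitian.det_eq_prod_eigenvalues, ← RCLike.ofReal_prod, RCLike.ofReal_re]
  have htrace : RCLike.re A.trace = ∑ i, hA.isHermitian.eigenvalues i := by
    rw [hA.isHermitian.trace_eq_sum_eigenvalues, ← RCLike.ofReal_sum, RCLike.ofReal_re]
  calc Real.log (RCLike.re A.det)
      = ∑ i, Real.log (hA.isHermitian.eigenvalues i) := by
        rw [hdet, Real.log_prod fun i _ ↦ (hA.eigenvalues_pos i).ne']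
    _ ≤ ∑ i, (hA.isHermitian.eigenvalues i - 1) :=
        Finset.sum_le_sum fun i _ ↦ Real.log_le_sub_one_of_pos (hA.eigenvalues_pos i)
    _ = RCLike.re A.trace - Fintype.card n := by simp [htrace]

open scoped MatrixOrder Matrix.Norms.L2Operator in
theorem exists_isUnit_eq_conjTranspose_mul_self (hA : A.PosDef) :
    ∃ C : Matrix n n 𝕜, IsUnit C ∧ A = Cᴴ * C :=
  CStarAlgebra.isStrictlyPositive_iff_eq_star_mul_self.mp hA.isStrictlyPositive

theorem log_re_det_mul_le_re_trace_mul_sub_card (hA : A.PosDef) (hB : B.PosDef) :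
    Real.log (RCLike.re (A * B).det) ≤ RCLike.re (A * B).trace - Fintype.card n := by
  obtain ⟨C, hC, rfl⟩ := exists_isUnit_eq_conjTranspose_mul_self hB
  have hdet : (A * (Cᴴ * C)).det = (C * A * Cᴴ).det := by
    simp only [det_mul]
    ring
  have htrace : (A * (Cᴴ * C)).trace = (C * A * Cᴴ).trace := by
    rw [← Matrix.mul_assoc, trace_mul_comm, ← Matrix.mul_assoc]
  rw [hdet, htrace]
  exact log_re_det_le_re_trace_sub_card (hC.posDef_star_right_conjugate_iff.mpr hA)

end Stein

section Observation

variable {n : Type*} [Fintype n] [DecidableEq n] {Y Sr Sc : Matrix n n ℝ}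

-- `det Y` may be negative: `Real.log Y.det` is `log |det Y|`.
theorem log_det_smul_mul_inv_mul_transpose_mul_inv {t : ℝ} (ht : t ≠ 0) (hY : Y.det ≠ 0)
    (hr : Sr.det ≠ 0) (hc : Sc.det ≠ 0) :
    Real.log (t • (Y * Sc⁻¹ * Yᵀ) * Sr⁻¹).det =
      Fintype.card n * Real.log t + 2 * Real.log Y.det - Real.log Sr.det - Real.log Sc.det := by
  have hdet : (t • (Y * Sc⁻¹ * Yᵀ) * Sr⁻¹).det =
      t ^ Fintype.card n * Y.det ^ 2 / Sr.det / Sc.det := by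
    simp only [det_mul, det_smul, det_transpose, det_nonsing_inv, Ring.inverse_eq_inv']
    ring
  have htn : t ^ Fintype.card n ≠ 0 := pow_ne_zero _ ht
  have hY2 : Y.det ^ 2 ≠ 0 := pow_ne_zero _ hY
  rw [hdet, Real.log_div (div_ne_zero (mul_ne_zero htn hY2) hr) hc,
    Real.log_div (mul_ne_zero htn hY2) hr, Real.log_mul htn hY2, Real.log_pow, Real.log_pow]
  norm_num

theorem le_inv_mul_trace_add_mul_log_det (hY : IsUnit Y.det) (hr : Sr.PosDef) (hc : Sc.PosDef)
    {c d : ℝ} (hc₀ : 0 < c) (hd : 0 < d) :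
    c * (Fintype.card n * (1 - Real.log c) + 2 * Real.log Y.det) ≤
      d⁻¹ * (Y * Sc⁻¹ * Yᵀ * Sr⁻¹).trace +
        c * (Real.log Sr.det + Real.log Sc.det + Fintype.card n * Real.log d) := by
  have ht : 0 < (d * c)⁻¹ := by positivity
  have hP : (Y * Sc⁻¹ * Yᵀ).PosDef :=
    ((isUnit_iff_isUnit_det Y).mpr hY).posDef_star_right_conjugate_iff.mpr hc.inv
  have hstein := log_re_det_mul_le_re_trace_mul_sub_card (hP.smul ht) hr.inv
  rw [RCLike.re_to_real, RCLike.re_to_real,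
    log_det_smul_mul_inv_mul_transpose_mul_inv ht.ne' hY.ne_zero hr.det_pos.ne' hc.det_pos.ne',
    Real.log_inv, Real.log_mul hd.ne' hc₀.ne', smul_mul, trace_smul, smul_eq_mul] at hstein
  have hscale : c * ((d * c)⁻¹ * (Y * Sc⁻¹ * Yᵀ * Sr⁻¹).trace) =
      d⁻¹ * (Y * Sc⁻¹ * Yᵀ * Sr⁻¹).trace := by
    field_simp
  linarith [mul_le_mul_of_nonneg_left hstein hc₀.le]

end Observation

theorem hetL_eq_sum {m p : ℕ} (Y : Fin p → Matrix (Fin m) (Fin m) ℝ) (d : Fin p → ℝ)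
    (Sr Sc : Matrix (Fin m) (Fin m) ℝ) :
    hetL Y d Sr Sc = ∑ i, ((d i)⁻¹ * (Y i * Sc⁻¹ * (Y i)ᵀ * Sr⁻¹).trace +
      m * (Real.log Sr.det + Real.log Sc.det + m * Real.log (d i))) := by
  simp only [hetL, Finset.sum_add_distrib, ← Finset.mul_sum, Finset.sum_const, Finset.card_univ,
    Fintype.card_fin, nsmul_eq_mul]
  ring

/-- For positive integers `m`, `p` and invertible `m × m` real matrices
`Y₁, …, Y_p`, the heteroscedastic scaled log-likelihood `L(d, Σr, Σc)` is bounded below over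
all positive `d₁, …, d_p` and symmetric positive definite `Σr`, `Σc`. -/
theorem hetL_bounded_below
    (m p : ℕ) (hm : 0 < m) (hp : 0 < p)
    (Y : Fin p → Matrix (Fin m) (Fin m) ℝ) (hY : ∀ i, IsUnit (Y i).det) :
    ∃ c : ℝ, ∀ (d : Fin p → ℝ) (Sr Sc : Matrix (Fin m) (Fin m) ℝ),
      (∀ i, 0 < d i) → Sr.PosDef → Sc.PosDef → c ≤ hetL Y d Sr Sc := by
  refine ⟨∑ i, m * (m * (1 - Real.log m) + 2 * Real.log (Y i).det), fun d Sr Sc hd hr hc ↦ ?_⟩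
  rw [hetL_eq_sum]
  refine Finset.sum_le_sum fun i _ ↦ ?_
  simpa only [Fintype.card_fin] using
    le_inv_mul_trace_add_mul_log_det (hY i) hr hc (Nat.cast_pos.mpr hm) (hd i)
end

section
/- Let m and p be positive integers, let Y₁, …, Y_p be nonzero m×m real matrices, and let Σr and Σc be symmetric positive definite m×m real matrices, so that A_i := tr(Y_i Σc⁻¹ Y_iᵗ Σr⁻¹) > 0 for each i. Then the infimum of L(d, Σr, Σc) over all d = (d₁, …, d_p) with each d_i > 0 equals m²·p + m·p·log det Σr + m·p·log det Σc + m²·Σ_{i=1}^p log(A_i / m²), and this infimum is attained at d_i = A_i / m² for each i. -/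
open Matrix

/-!
With `vec` the stacking of columns, `A_i = (vec Y_i)ᵀ (Σc⁻¹ ⊗ Σr⁻¹) (vec Y_i)`, and a Kronecker
product of positive definite matrices is positive definite, so `A_i > 0`. The likelihood separates
into one summand `A_i / d_i + m² log d_i` per observation, and `log t ≤ t - 1` at
`t = A_i / (m² d_i)` shows that each is smallest at `d_i = A_i / m²`.
-/

section WeightedTrace

open scoped ComplexOrder Kronecker

variable {ι κ R 𝕜 : Type*} [Fintype ι] [Fintype κ]

lemma trace_mul_mul_conjTranspose_mul_eq_dotProduct_kronecker [NonUnitalCommSemiring R] [Star R]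
    (X : Matrix ι κ R) (P : Matrix κ κ R) (Q : Matrix ι ι R) :
    (X * P * Xᴴ * Q).trace = star (vec X) ⬝ᵥ (Pᵀ ⊗ₖ Q) *ᵥ vec X := by
  rw [kronecker_mulVec_vec, transpose_transpose, star_vec_dotProduct_vec,
    trace_mul_cycle (X * P), trace_mul_comm, Matrix.mul_assoc Q X P]

lemma trace_mul_mul_conjTranspose_mul_pos [RCLike 𝕜] {X : Matrix ι κ 𝕜} {P : Matrix κ κ 𝕜}
    {Q : Matrix ι ι 𝕜} (hX : X ≠ 0) (hP : P.PosDef) (hQ : Q.PosDef) :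
    0 < (X * P * Xᴴ * Q).trace := by
  rw [trace_mul_mul_conjTranspose_mul_eq_dotProduct_kronecker]
  exact (hP.transpose.kronecker hQ).dotProduct_mulVec_pos (vec_eq_zero_iff.not.mpr hX)

end WeightedTrace

section ScaleCost

/-- The contribution `a / d + c log d` of one observation with scale `d > 0` to the likelihood. Up
to an additive constant it is twice the negative log-likelihood of `N(0, d·I)` in dimension `c` at a
vector of squared norm `a`; the dimension is encoded as a real number. -/
noncomputable def scaleCost (c a d : ℝ) : ℝ :=
  d⁻¹ * a + c * Real.log d

variable {c a : ℝ}

lemma scaleCost_div (ha : a ≠ 0) : scaleCost c a (a / c) = c + c * Real.log (a / c) := by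
  rw [scaleCost, inv_div, div_mul_cancel₀ c ha]

lemma isMinOn_scaleCost (hc : 0 < c) (ha : 0 < a) :
    IsMinOn (scaleCost c a) (Set.Ioi 0) (a / c) := by
  intro d (hd : 0 < d)
  have hlog : Real.log (a / c) - Real.log d ≤ a / c / d - 1 := by
    rw [← Real.log_div (div_pos ha hc).ne' hd.ne']
    exact Real.log_le_sub_one_of_pos (by positivity)
  calc scaleCost c a (a / c)
      = c + c * Real.log d + c * (Real.log (a / c) - Real.log d) := by
        rw [scaleCost_div ha.ne']; ring
    _ ≤ c + c * Real.log d + c * (a / c / d - 1) := by gcongr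
    _ = scaleCost c a d := by rw [scaleCost]; field_simp; ring

end ScaleCost

lemma hetL_eq_sum_scaleCost {m p : ℕ} (Y : Fin p → Matrix (Fin m) (Fin m) ℝ) (d : Fin p → ℝ)
    (Sr Sc : Matrix (Fin m) (Fin m) ℝ) :
    hetL Y d Sr Sc
      = ∑ i, scaleCost ((m : ℝ) ^ 2) (Y i * Sc⁻¹ * (Y i)ᵀ * Sr⁻¹).trace (d i)
        + m * p * Real.log Sr.det + m * p * Real.log Sc.det := by
  simp only [hetL, scaleCost, Finset.sum_add_distrib, ← Finset.mul_sum]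
  ring

/-- For nonzero `Y₁, …, Y_p` and symmetric positive definite `Σr`, `Σc`, set
`A_i = tr(Yᵢ Σc⁻¹ Yᵢᵗ Σr⁻¹)`, which is positive.  The infimum of `L(d, Σr, Σc)` over positive
`d` equals `m²p + mp·log det Σr + mp·log det Σc + m²·Σᵢ log(A_i/m²)` and is attained at
`d_i = A_i/m²`. -/
theorem hetL_profile_in_d
    (m p : ℕ) (hm : 0 < m) (hp : 0 < p)
    (Y : Fin p → Matrix (Fin m) (Fin m) ℝ) (hY : ∀ i, Y i ≠ 0)
    (Sr Sc : Matrix (Fin m) (Fin m) ℝ) (hSr : Sr.PosDef) (hSc : Sc.PosDef)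
    (A : Fin p → ℝ) (hA : ∀ i, A i = (Y i * Sc⁻¹ * (Y i)ᵀ * Sr⁻¹).trace) :
    (∀ i, 0 < A i) ∧
    IsLeast {x : ℝ | ∃ d : Fin p → ℝ, (∀ i, 0 < d i) ∧ x = hetL Y d Sr Sc}
      ((m : ℝ) ^ 2 * p + m * p * Real.log Sr.det + m * p * Real.log Sc.det
        + (m : ℝ) ^ 2 * ∑ i, Real.log (A i / (m : ℝ) ^ 2)) ∧
    hetL Y (fun i => A i / (m : ℝ) ^ 2) Sr Sc
      = (m : ℝ) ^ 2 * p + m * p * Real.log Sr.det + m * p * Real.log Sc.det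
        + (m : ℝ) ^ 2 * ∑ i, Real.log (A i / (m : ℝ) ^ 2) := by
  have hA_pos (i) : 0 < A i := by
    simpa only [hA, conjTranspose_eq_transpose_of_trivial] using
      trace_mul_mul_conjTranspose_mul_pos (hY i) hSc.inv hSr.inv
  have hm_sq : (0 : ℝ) < (m : ℝ) ^ 2 := by positivity
  have hL_eq (d : Fin p → ℝ) : hetL Y d Sr Sc = ∑ i, scaleCost ((m : ℝ) ^ 2) (A i) (d i)
      + m * p * Real.log Sr.det + m * p * Real.log Sc.det := by
    simp only [hetL_eq_sum_scaleCost, hA]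
  have h_value : hetL Y (fun i => A i / (m : ℝ) ^ 2) Sr Sc
      = (m : ℝ) ^ 2 * p + m * p * Real.log Sr.det + m * p * Real.log Sc.det
        + (m : ℝ) ^ 2 * ∑ i, Real.log (A i / (m : ℝ) ^ 2) := by
    simp only [hL_eq, scaleCost_div (hA_pos _).ne', Finset.sum_add_distrib, ← Finset.mul_sum,
      Finset.sum_const, Finset.card_univ, Fintype.card_fin, nsmul_eq_mul]
    ring
  refine ⟨hA_pos, ⟨⟨_, fun i => div_pos (hA_pos i) hm_sq, h_value.symm⟩, ?_⟩, h_value⟩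
  rintro _ ⟨d, hd, rfl⟩
  rw [← h_value, hL_eq, hL_eq]
  gcongr with i
  exact isMinOn_scaleCost hm_sq (hA_pos i) (hd i)
end
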